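/- arXiv:2002.01178 — 2 statements merged into one kernel-verified Lean document; each statement's English description precedes it below -/
import Mathlib

section
/- Let s_1, …, s_k be binary strings and let m := max_{i∈[k]} |s̃_i| be the maximum condensation length. If z is a mean of s_1, …, s_k, then |z̃| ≤ m + 1. -/
/-- One step of a warping path: move down, right, or diagonally. -/
def wpStep (a b : ℕ × ℕ) : Prop :=
  (b.1 = a.1 + 1 ∧ b.2 = a.2) ∨ (b.1 = a.1 ∧ b.2 = a.2 + 1) ∨
    (b.1 = a.1 + 1 ∧ b.2 = a.2 + 1)

/-- A warping path of order `m × n` (0-based indices). -/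
def IsWarpingPath (m n : ℕ) (p : List (ℕ × ℕ)) : Prop :=
  p.head? = some (0, 0) ∧ p.getLast? = some (m - 1, n - 1) ∧
    List.Chain' wpStep p ∧ ∀ q ∈ p, q.1 < m ∧ q.2 < n

/-- The cost of aligning binary strings `x` and `y` along path `p`:
the number of aligned mismatching pairs (for binary symbols,
`(x[i] - y[j])^2` is `0` if the symbols agree and `1` otherwise). -/
def pathCost (x y : List Bool) (p : List (ℕ × ℕ)) : ℕ :=
  (p.map fun q => if x.getD q.1 false = y.getD q.2 false then 0 else 1).sum

/-- The squared dynamic time warping distance `dtw(x,y)²` of two binary strings. -/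
noncomputable def dtwSq (x y : List Bool) : ℕ :=
  sInf {c | ∃ p, IsWarpingPath x.length y.length p ∧ pathCost x y p = c}

/-- The dynamic time warping distance `dtw(x,y)`. -/
noncomputable def dtw (x y : List Bool) : ℝ :=
  Real.sqrt (dtwSq x y)

/-- The condensation of a binary string: collapse every maximal run of equal
consecutive symbols to a single symbol. -/
def condense : List Bool → List Bool
  | [] => []
  | [a] => [a]
  | a :: b :: rest => if a = b then condense (b :: rest) else a :: condense (b :: rest)

/-- Auxiliary function collecting the block sizes of a binary string. -/
def blockSizesAux : Bool → ℕ → List Bool → List ℕ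
  | _, cnt, [] => [cnt]
  | cur, cnt, a :: rest =>
      if a = cur then blockSizesAux cur (cnt + 1) rest
      else cnt :: blockSizesAux a 1 rest

/-- The list of block sizes of a binary string (sizes of the maximal runs
of equal consecutive symbols, from left to right). -/
def blockSizes : List Bool → List ℕ
  | [] => []
  | a :: rest => blockSizesAux a 1 rest

/-- The objective `F(z) = Σᵢ dtw(sᵢ, z)²`. -/
noncomputable def Fobj (ss : List (List Bool)) (z : List Bool) : ℕ :=
  (ss.map fun s => dtwSq s z).sum

/-- `z` is a mean of the strings `ss`: a nonempty binary string minimizing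
`F` among all nonempty binary strings. -/
def IsMean (ss : List (List Bool)) (z : List Bool) : Prop :=
  z ≠ [] ∧ ∀ w : List Bool, w ≠ [] → Fobj ss z ≤ Fobj ss w

/-- The optimal value of a Min 1-Separated Sum instance with integers `b`
(1-based indexing) and selection size `r`: minimize the sum of `r` selected
integers, no two of which are consecutive. -/
noncomputable def mssValue (b : List ℕ) (r : ℕ) : ℕ :=
  sInf {s | ∃ I : List ℕ, I.length = r ∧ (∀ i ∈ I, 1 ≤ i ∧ i ≤ b.length) ∧
    List.Chain' (fun a c => a + 2 ≤ c) I ∧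
    (I.map fun i => b.getD (i - 1) 0).sum = s}

/-!
Let `z` have `n` blocks, let `s` have `m` blocks, and let `δ` be `0` or `1` according to whether
the first symbols of `s` and `z` agree. Every warping path satisfies `n + δ ≤ 2 · cost + m`, and an
alternating `z` with `n ≥ m + δ` attains this bound up to one: `2 · dtw(s, z)² + m ≤ n + 1 + δ`.

Suppose now that `n ≥ m + 2` for every input. If some input does not start with the first symbol of
`z`, then the alternating string of length `n - 1` starting with the other symbol is strictly closer
to that input and, by parity, no farther from the rest. Otherwise the alternating string of length
`n - 2` with the same first symbol as `z` is strictly closer to every input.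
-/

/-- The discrete distance, as a natural number. Besides symbols it is applied to `List.head?`, so
that a string and its tail can be compared without treating the one-symbol string separately. -/
def mismatch {α : Type*} [DecidableEq α] (a b : α) : ℕ := if a = b then 0 else 1

section Mismatch

variable {α : Type*} [DecidableEq α]

@[simp]
theorem mismatch_self (a : α) : mismatch a a = 0 := if_pos rfl

theorem mismatch_of_ne {a b : α} (h : a ≠ b) : mismatch a b = 1 := if_neg h

theorem mismatch_comm (a b : α) : mismatch a b = mismatch b a := by
  simp only [mismatch, eq_comm]

theorem mismatch_triangle (a b c : α) : mismatch a c ≤ mismatch a b + mismatch b c := by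
  unfold mismatch
  grind

@[simp]
theorem mismatch_some_some (a b : α) : mismatch (some a) (some b) = mismatch a b := by
  simp only [mismatch, Option.some.injEq]

end Mismatch

theorem mismatch_add_mismatch_not (a b : Bool) : mismatch a b + mismatch a (!b) = 1 := by
  decide +revert

theorem length_condense_cons (a : Bool) (x : List Bool) :
    (condense (a :: x)).length = (condense x).length + mismatch (some a) x.head? := by
  cases x with
  | nil => rfl
  | cons b x =>
    by_cases h : a = b
    · simp [condense, h]
    · simp [condense, h, mismatch_of_ne]

theorem length_condense_pos {x : List Bool} (hx : x ≠ []) : 0 < (condense x).length := by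
  induction x with
  | nil => contradiction
  | cons a x ih =>
    cases x with
    | nil => exact Nat.one_pos
    | cons b x =>
      rw [length_condense_cons]
      exact Nat.add_pos_left (ih (List.cons_ne_nil b x)) _

/-- `IsWarpingCost x y c` says that some warping path between `x` and `y` has cost `c`. This
recursive description, in which the constructors record the first step of the path, replaces index
computations by structural induction; see `isWarpingCost_iff_exists_isWarpingPath`. -/
inductive IsWarpingCost : List Bool → List Bool → ℕ → Prop
  | single (a b : Bool) : IsWarpingCost [a] [b] (mismatch a b)
  | down (a : Bool) {b : Bool} {x y : List Bool} {c : ℕ} :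
      IsWarpingCost x (b :: y) c → IsWarpingCost (a :: x) (b :: y) (mismatch a b + c)
  | right {a : Bool} (b : Bool) {x y : List Bool} {c : ℕ} :
      IsWarpingCost (a :: x) y c → IsWarpingCost (a :: x) (b :: y) (mismatch a b + c)
  | diag (a b : Bool) {x y : List Bool} {c : ℕ} :
      IsWarpingCost x y c → IsWarpingCost (a :: x) (b :: y) (mismatch a b + c)

/-- A final segment, starting at `q`, of a warping path of order `m × n`; for `q = (0, 0)` this is
definitionally `IsWarpingPath m n p`. -/
def IsWarpingPathFrom (m n : ℕ) (q : ℕ × ℕ) (p : List (ℕ × ℕ)) : Prop :=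
  p.head? = some q ∧ p.getLast? = some (m - 1, n - 1) ∧
    List.IsChain wpStep p ∧ ∀ r ∈ p, r.1 < m ∧ r.2 < n

theorem pathCost_cons (x y : List Bool) (q : ℕ × ℕ) (p : List (ℕ × ℕ)) :
    pathCost x y (q :: p) =
      mismatch (x.getD q.1 false) (y.getD q.2 false) + pathCost x y p := rfl

theorem drop_eq_getD_cons {α : Type*} (d : α) {x : List α} {i : ℕ} (h : i < x.length) :
    x.drop i = x.getD i d :: x.drop (i + 1) := by
  rw [List.drop_eq_getElem_cons h, List.getD_eq_getElem _ _ h]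

theorem lt_length_and_eq_of_cons_eq_drop {α : Type*} (d : α) {x l : List α} {a : α} {i : ℕ}
    (h : a :: l = x.drop i) : i < x.length ∧ a = x.getD i d ∧ l = x.drop (i + 1) := by
  have hi : i < x.length := by
    by_contra! hle
    exact List.cons_ne_nil a l (h.trans (List.drop_eq_nil_of_le hle))
  rw [drop_eq_getD_cons d hi] at h
  exact ⟨hi, List.cons.inj h⟩

namespace IsWarpingPathFrom

theorem lt {m n : ℕ} {q : ℕ × ℕ} {p : List (ℕ × ℕ)} (h : IsWarpingPathFrom m n q p) :
    q.1 < m ∧ q.2 < n :=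
  h.2.2.2 q (List.mem_of_mem_head? h.1)

theorem singleton {m n : ℕ} (hm : 0 < m) (hn : 0 < n) :
    IsWarpingPathFrom m n (m - 1, n - 1) [(m - 1, n - 1)] := by
  refine ⟨rfl, rfl, List.isChain_singleton _, fun r hr => ?_⟩
  rw [List.mem_singleton.1 hr]
  exact ⟨Nat.sub_one_lt_of_lt hm, Nat.sub_one_lt_of_lt hn⟩

theorem cons {m n : ℕ} {q r : ℕ × ℕ} {p : List (ℕ × ℕ)} (h : IsWarpingPathFrom m n q p)
    (hrq : wpStep r q) : IsWarpingPathFrom m n r (r :: p) := by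
  have hq := h.lt
  obtain ⟨hhead, hlast, hchain, hmem⟩ := h
  have hr : r.1 < m ∧ r.2 < n := by
    unfold wpStep at hrq
    omega
  refine ⟨rfl, ?_, hchain.cons ?_, List.forall_mem_cons.2 ⟨hr, hmem⟩⟩
  · rw [List.getLast?_cons, hlast, Option.getD_some]
  · rw [hhead]
    rintro _ ⟨⟩
    exact hrq

theorem isWarpingCost_drop {x y : List Bool} {q : ℕ × ℕ} {p : List (ℕ × ℕ)}
    (h : IsWarpingPathFrom x.length y.length q p) :
    IsWarpingCost (x.drop q.1) (y.drop q.2) (pathCost x y p) := by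
  induction p generalizing q with
  | nil => cases h.1
  | cons q' p ih =>
    obtain ⟨hi, hj⟩ := h.lt
    obtain ⟨hhead, hlast, hchain, hmem⟩ := h
    obtain rfl : q = q' := (Option.some.inj hhead).symm
    rw [drop_eq_getD_cons false hi, drop_eq_getD_cons false hj, pathCost_cons]
    cases p with
    | nil =>
      cases hlast
      rw [List.drop_of_length_le (by omega), List.drop_of_length_le (by omega)]
      exact .single _ _
    | cons r p =>
      rw [List.isChain_cons_cons] at hchain
      rw [List.getLast?_cons_cons] at hlast
      have tail := ih ⟨rfl, hlast, hchain.2, (List.forall_mem_cons.1 hmem).2⟩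
      obtain ⟨i, j⟩ := q
      obtain ⟨i', j'⟩ := r
      obtain ⟨rfl, rfl⟩ | ⟨rfl, rfl⟩ | ⟨rfl, rfl⟩ : (i' = i + 1 ∧ j' = j) ∨
          (i' = i ∧ j' = j + 1) ∨ (i' = i + 1 ∧ j' = j + 1) := hchain.1
      · rw [drop_eq_getD_cons false hj] at tail
        exact .down _ tail
      · rw [drop_eq_getD_cons false hi] at tail
        exact .right _ tail
      · exact .diag _ _ tail

end IsWarpingPathFrom

namespace IsWarpingCost

theorem exists_isWarpingPathFrom {x y u v : List Bool} {c i j : ℕ} (h : IsWarpingCost u v c)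
    (hu : u = x.drop i) (hv : v = y.drop j) :
    ∃ p, IsWarpingPathFrom x.length y.length (i, j) p ∧ pathCost x y p = c := by
  induction h generalizing i j with
  | single a b =>
    obtain ⟨hi, rfl, hx⟩ := lt_length_and_eq_of_cons_eq_drop false hu
    obtain ⟨hj, rfl, hy⟩ := lt_length_and_eq_of_cons_eq_drop false hv
    obtain rfl : i = x.length - 1 := by
      have := List.drop_eq_nil_iff.1 hx.symm
      omega
    obtain rfl : j = y.length - 1 := by
      have := List.drop_eq_nil_iff.1 hy.symm
      omega
    exact ⟨_, .singleton (by omega) (by omega), rfl⟩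
  | down a _ ih =>
    obtain ⟨-, rfl, hx⟩ := lt_length_and_eq_of_cons_eq_drop false hu
    obtain ⟨-, rfl, -⟩ := lt_length_and_eq_of_cons_eq_drop false hv
    obtain ⟨p, hp, rfl⟩ := ih hx hv
    exact ⟨_, hp.cons (.inl ⟨rfl, rfl⟩), pathCost_cons ..⟩
  | right b _ ih =>
    obtain ⟨-, rfl, -⟩ := lt_length_and_eq_of_cons_eq_drop false hu
    obtain ⟨-, rfl, hy⟩ := lt_length_and_eq_of_cons_eq_drop false hv
    obtain ⟨p, hp, rfl⟩ := ih hu hy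
    exact ⟨_, hp.cons (.inr (.inl ⟨rfl, rfl⟩)), pathCost_cons ..⟩
  | diag a b _ ih =>
    obtain ⟨-, rfl, hx⟩ := lt_length_and_eq_of_cons_eq_drop false hu
    obtain ⟨-, rfl, hy⟩ := lt_length_and_eq_of_cons_eq_drop false hv
    obtain ⟨p, hp, rfl⟩ := ih hx hy
    exact ⟨_, hp.cons (.inr (.inr ⟨rfl, rfl⟩)), pathCost_cons ..⟩

end IsWarpingCost

theorem isWarpingCost_iff_exists_isWarpingPath {x y : List Bool} {c : ℕ} :
    IsWarpingCost x y c ↔ ∃ p, IsWarpingPath x.length y.length p ∧ pathCost x y p = c := by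
  constructor
  · intro h
    exact h.exists_isWarpingPathFrom (i := 0) (j := 0) rfl rfl
  · rintro ⟨p, hp, rfl⟩
    exact IsWarpingPathFrom.isWarpingCost_drop (q := (0, 0)) hp

theorem dtwSq_eq_sInf_isWarpingCost (x y : List Bool) :
    dtwSq x y = sInf {c | IsWarpingCost x y c} := by
  simp_rw [isWarpingCost_iff_exists_isWarpingPath]
  rfl

theorem IsWarpingCost.dtwSq_le {x y : List Bool} {c : ℕ} (h : IsWarpingCost x y c) :
    dtwSq x y ≤ c :=
  dtwSq_eq_sInf_isWarpingCost x y ▸ Nat.sInf_le h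

theorem exists_isWarpingCost (a b : Bool) (x y : List Bool) :
    ∃ c, IsWarpingCost (a :: x) (b :: y) c := by
  induction x generalizing a with
  | nil =>
    induction y generalizing b with
    | nil => exact ⟨_, .single a b⟩
    | cons b' y ih => exact (ih b').imp' _ fun _ h => h.right b
  | cons a' x ih => exact (ih a').imp' _ fun _ h => h.down a

theorem isWarpingCost_dtwSq (a b : Bool) (x y : List Bool) :
    IsWarpingCost (a :: x) (b :: y) (dtwSq (a :: x) (b :: y)) :=
  dtwSq_eq_sInf_isWarpingCost _ _ ▸ Nat.sInf_mem (exists_isWarpingCost a b x y)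

/-- Each step of a warping path meets at most one new block of `y`, and unless it also meets a new
block of `x`, one of its two endpoints is a mismatch; a mismatch is an endpoint of at most two
steps. -/
theorem IsWarpingCost.length_condense_add_mismatch_le {x y : List Bool} {c : ℕ}
    (h : IsWarpingCost x y c) :
    (condense y).length + mismatch x.head? y.head? ≤ 2 * c + (condense x).length := by
  induction h with
  | single a b =>
    simp only [condense, List.length_singleton, List.head?_cons, mismatch_some_some]
    omega
  | down a _ ih =>
    simp only [length_condense_cons a, List.head?_cons, mismatch_some_some] at ih ⊢
    omega
  | @right a b x y c _ ih =>
    have := mismatch_triangle (some b) (some a) y.head?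
    simp only [length_condense_cons b, List.head?_cons, mismatch_some_some, mismatch_comm b a]
      at ih this ⊢
    omega
  | @diag a b x y c _ ih =>
    have := mismatch_triangle (some b) (some a) y.head?
    have := mismatch_triangle (some a) x.head? y.head?
    simp only [length_condense_cons, List.head?_cons, mismatch_some_some, mismatch_comm b a]
      at *
    omega

theorem length_condense_add_mismatch_le_two_mul_dtwSq_add (a b : Bool) (x y : List Bool) :
    (condense (b :: y)).length + mismatch a b ≤
      2 * dtwSq (a :: x) (b :: y) + (condense (a :: x)).length := by
  simpa only [List.head?_cons, mismatch_some_some] using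
    (isWarpingCost_dtwSq a b x y).length_condense_add_mismatch_le

theorem exists_isWarpingCost_singleton_iterate_not (a b : Bool) (n : ℕ) :
    ∃ c, IsWarpingCost [a] (List.iterate not b (n + 1)) c ∧ 2 * c ≤ n + 1 + mismatch a b := by
  induction n generalizing b with
  | zero =>
    refine ⟨_, .single a b, ?_⟩
    have := mismatch_add_mismatch_not a b
    omega
  | succ n ih =>
    obtain ⟨c, hc, hle⟩ := ih (!b)
    have := mismatch_add_mismatch_not a b
    refine ⟨_, hc.right b, ?_⟩
    omega

theorem exists_isWarpingCost_iterate_not_of_head_eq (a : Bool) (x : List Bool) {n : ℕ}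
    (hn : (condense (a :: x)).length ≤ n) :
    ∃ c, IsWarpingCost (a :: x) (List.iterate not a n) c ∧
      2 * c + (condense (a :: x)).length ≤ n + 1 := by
  obtain ⟨n, rfl⟩ := Nat.exists_add_one_eq.2
    ((length_condense_pos (List.cons_ne_nil a x)).trans_le hn)
  induction x generalizing a n with
  | nil =>
    obtain ⟨c, hc, hle⟩ := exists_isWarpingCost_singleton_iterate_not a a n
    rw [mismatch_self] at hle
    exact ⟨c, hc, Nat.succ_le_succ hle⟩
  | cons b x ih =>
    have hpos := length_condense_pos (List.cons_ne_nil b x)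
    rw [length_condense_cons, List.head?_cons, mismatch_some_some] at hn ⊢
    by_cases hab : a = b
    · subst hab
      rw [mismatch_self] at hn ⊢
      obtain ⟨c, hc, hle⟩ := ih a n hn
      refine ⟨_, hc.down a, ?_⟩
      rw [mismatch_self]
      omega
    · obtain rfl : b = !a := Bool.eq_not.2 (Ne.symm hab)
      rw [mismatch_of_ne hab] at hn ⊢
      obtain ⟨n, rfl⟩ : ∃ k, n = k + 1 := ⟨n - 1, by omega⟩
      obtain ⟨c, hc, hle⟩ := ih (!a) n (by omega)
      refine ⟨_, hc.diag a a, ?_⟩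
      rw [mismatch_self]
      omega

theorem two_mul_dtwSq_iterate_not_add_le (a b : Bool) (x : List Bool) {n : ℕ}
    (hn : (condense (a :: x)).length + mismatch a b ≤ n) :
    2 * dtwSq (a :: x) (List.iterate not b n) + (condense (a :: x)).length ≤
      n + 1 + mismatch a b := by
  suffices ∃ c, IsWarpingCost (a :: x) (List.iterate not b n) c ∧
      2 * c + (condense (a :: x)).length ≤ n + 1 + mismatch a b by
    obtain ⟨c, hc, hle⟩ := this
    have := hc.dtwSq_le
    omega
  by_cases hab : a = b
  · subst hab
    rw [mismatch_self] at hn ⊢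
    exact exists_isWarpingCost_iterate_not_of_head_eq a x hn
  · obtain rfl : a = !b := Bool.eq_not.2 hab
    rw [mismatch_of_ne hab] at hn ⊢
    obtain ⟨n, rfl⟩ : ∃ k, n = k + 1 := ⟨n - 1, by omega⟩
    obtain ⟨c, hc, hle⟩ := exists_isWarpingCost_iterate_not_of_head_eq (!b) x (n := n) (by omega)
    refine ⟨_, hc.right b, ?_⟩
    rw [mismatch_of_ne hab]
    omega

theorem dtwSq_iterate_not_sub_two_lt (a : Bool) (x y : List Bool)
    (h : (condense (a :: x)).length + 2 ≤ (condense (a :: y)).length) :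
    dtwSq (a :: x) (List.iterate not a ((condense (a :: y)).length - 2)) <
      dtwSq (a :: x) (a :: y) := by
  have lower := length_condense_add_mismatch_le_two_mul_dtwSq_add a a x y
  have upper := two_mul_dtwSq_iterate_not_add_le a a x (n := (condense (a :: y)).length - 2)
  rw [mismatch_self] at lower upper
  omega

theorem dtwSq_iterate_not_sub_one_add_mismatch_le (a b : Bool) (x y : List Bool)
    (h : (condense (a :: x)).length + 2 ≤ (condense (b :: y)).length) :
    dtwSq (a :: x) (List.iterate not (!b) ((condense (b :: y)).length - 1)) + mismatch a b ≤
      dtwSq (a :: x) (b :: y) := by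
  have lower := length_condense_add_mismatch_le_two_mul_dtwSq_add a b x y
  have upper := two_mul_dtwSq_iterate_not_add_le a (!b) x (n := (condense (b :: y)).length - 1)
  have := mismatch_add_mismatch_not a b
  omega

namespace IsMean

theorem not_exists_dtwSq_lt {ss : List (List Bool)} {z w : List Bool}
    (hz : IsMean ss z) (hw : w ≠ []) (hle : ∀ s ∈ ss, dtwSq s w ≤ dtwSq s z) :
    ¬ ∃ s ∈ ss, dtwSq s w < dtwSq s z :=
  fun hlt => (List.sum_lt_sum _ _ hle hlt).not_ge (hz.2 w hw)

theorem head_eq_of_length_condense_add_two_le {ss : List (List Bool)} {b : Bool} {y : List Bool}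
    (hz : IsMean ss (b :: y)) (hne : ∀ s ∈ ss, s ≠ [])
    (hlen : ∀ s ∈ ss, (condense s).length + 2 ≤ (condense (b :: y)).length)
    {a : Bool} {x : List Bool} (hax : a :: x ∈ ss) : a = b := by
  by_contra hab
  have hlen_ax := hlen _ hax
  refine hz.not_exists_dtwSq_lt (w := List.iterate not (!b) ((condense (b :: y)).length - 1))
    (mt List.iterate_eq_nil.1 (by omega)) (fun s hs => ?_) ⟨a :: x, hax, ?_⟩
  · obtain ⟨a', x', rfl⟩ := List.exists_cons_of_ne_nil (hne s hs)
    exact le_of_add_le_left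
      (dtwSq_iterate_not_sub_one_add_mismatch_le a' b x' y (hlen _ hs))
  · have := dtwSq_iterate_not_sub_one_add_mismatch_le a b x y hlen_ax
    rwa [mismatch_of_ne hab] at this

end IsMean

/-- every mean of binary strings `s₁, …, s_k` has condensation
length at most `m + 1`, where `m` is the maximum condensation length of the
inputs. -/
theorem mean_condensation_upper_bound (ss : List (List Bool)) (hss : ss ≠ [])
    (hne : ∀ s ∈ ss, s ≠ []) (z : List Bool) (hz : IsMean ss z) :
    (condense z).length ≤ ((ss.map fun s => (condense s).length).foldr max 0) + 1 := by
  by_contra! hlong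
  obtain ⟨b, y, rfl⟩ := List.exists_cons_of_ne_nil hz.1
  have hlen : ∀ s ∈ ss, (condense s).length + 2 ≤ (condense (b :: y)).length := fun s hs => by
    have : (condense s).length ≤ (ss.map fun s => (condense s).length).foldr max 0 :=
      List.le_max_of_le (List.mem_map_of_mem hs) le_rfl
    omega
  have hlt : ∀ s ∈ ss, dtwSq s (List.iterate not b ((condense (b :: y)).length - 2)) <
      dtwSq s (b :: y) := fun s hs => by
    obtain ⟨a, x, rfl⟩ := List.exists_cons_of_ne_nil (hne s hs)
    obtain rfl := hz.head_eq_of_length_condense_add_two_le hne hlen hs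
    exact dtwSq_iterate_not_sub_two_lt a x y (hlen _ hs)
  obtain ⟨s, hs⟩ := List.exists_mem_of_ne_nil ss hss
  have hpos := length_condense_pos (hne s hs)
  have hlen_s := hlen s hs
  exact hz.not_exists_dtwSq_lt (mt List.iterate_eq_nil.1 (by omega))
    (fun s hs => (hlt s hs).le) ⟨s, hs, hlt s hs⟩
end

section
/- For the two input strings s_1 = 000 and s_2 = 111, the strings 01 and 10 are means: F(01) = F(10) = 2 and F(z) ≥ 2 for every binary string z. Moreover, no binary string with exactly one block is a mean, so there are means whose condensation length exceeds the maximum condensation length of the inputs by one (showing the upper bound m + 1 on the condensation length of a mean is tight). -/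
/-!
The argument works for all inputs `0^m` and `1^n` with `m, n ≥ 3`. A warping path visits every row
and every column. So aligning a constant string `b^m` with `z` costs at least one per symbol `!b` of
`z`, and when `b` occurs in `z` this is attained by moving through the `m` rows in a column carrying
`b`. If instead `z` avoids `b`, then every aligned pair is a mismatch and the cost is at least `m`.
Hence `F z = |z|` when both symbols occur in `z`, which is minimal at `01` and `10`, whereas
`F z ≥ 3` when `z` is constant.
-/

open List

theorem wpStep.snd_le_add_one {a b : ℕ × ℕ} (hab : wpStep a b) : b.2 ≤ a.2 + 1 := by
  unfold wpStep at hab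
  omega

theorem wpStep_swap_iff {a b : ℕ × ℕ} : wpStep a.swap b.swap ↔ wpStep a b := by
  simp only [wpStep, Prod.fst_swap, Prod.snd_swap]
  omega

theorem wpStep_add_right_iff {a b s : ℕ × ℕ} : wpStep (a + s) (b + s) ↔ wpStep a b := by
  simp only [wpStep, Prod.fst_add, Prod.snd_add]
  omega

namespace IsWarpingPath

variable {m n : ℕ} {p : List (ℕ × ℕ)}

theorem zero_mem (hp : IsWarpingPath m n p) : (0, 0) ∈ p :=
  mem_of_head? hp.1

theorem pos_left (hp : IsWarpingPath m n p) : 0 < m :=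
  (hp.2.2.2 _ hp.zero_mem).1

theorem pos_right (hp : IsWarpingPath m n p) : 0 < n :=
  (hp.2.2.2 _ hp.zero_mem).2

theorem map_swap (hp : IsWarpingPath m n p) : IsWarpingPath n m (p.map Prod.swap) := by
  obtain ⟨hhead, hlast, hchain, hlt⟩ := hp
  refine ⟨by simp [hhead], by simp [hlast], ?_, ?_⟩
  · exact isChain_map_of_isChain Prod.swap (fun _ _ => wpStep_swap_iff.2) hchain
  · simp only [mem_map]
    rintro _ ⟨q, hq, rfl⟩
    exact (hlt q hq).symm

theorem cons_map_add (hp : IsWarpingPath m n p) {s : ℕ × ℕ} (hs : wpStep (0, 0) s) :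
    IsWarpingPath (m + s.1) (n + s.2) ((0, 0) :: p.map (· + s)) := by
  have hm := hp.pos_left
  have hn := hp.pos_right
  obtain ⟨hhead, hlast, hchain, hlt⟩ := hp
  refine ⟨rfl, ?_, ?_, ?_⟩
  · simp only [getLast?_cons, getLast?_map, hlast, Option.map_some, Option.getD_some,
      Option.some.injEq, Prod.ext_iff, Prod.fst_add, Prod.snd_add]
    omega
  · refine (isChain_map_of_isChain (· + s) (fun _ _ => wpStep_add_right_iff.2) hchain).cons ?_
    simpa only [head?_map, hhead, Option.map_some, Option.mem_some_iff, forall_eq',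
      ← Prod.zero_eq_mk, zero_add] using hs
  · simp only [mem_cons, mem_map]
    rintro _ (rfl | ⟨q, hq, rfl⟩)
    · exact ⟨by omega, by omega⟩
    · simpa using hlt q hq

theorem exists_mem_snd_eq (hp : IsWarpingPath m n p) {j : ℕ} (hj : j < n) :
    ∃ q ∈ p, q.2 = j := by
  by_contra! hskip
  obtain ⟨hhead, hlast, hchain, -⟩ := hp
  have hstep : p.IsChain fun a b => b.2 ≤ a.2 + 1 ∧ b.2 ≠ j :=
    hchain.imp_of_mem_imp fun a b _ hb hab => ⟨hab.snd_le_add_one, hskip b hb⟩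
  have hzero : 0 ≠ j := hskip _ (mem_of_head? hhead)
  have hlt : ∀ q ∈ p, q.2 < j := by
    refine hstep.induction (·.2 < j) p (fun a b hab ha => by omega) fun hne => ?_
    rw [head_of_head?_eq_some hhead]
    exact Nat.pos_of_ne_zero hzero.symm
  have hend : n - 1 < j := hlt _ (mem_of_getLast? hlast)
  omega

end IsWarpingPath

theorem isWarpingPath_one_one : IsWarpingPath 1 1 [(0, 0)] :=
  ⟨rfl, rfl, isChain_singleton _, by simp⟩

theorem exists_isWarpingPath {m n : ℕ} (hm : 0 < m) (hn : 0 < n) :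
    ∃ p, IsWarpingPath m n p := by
  induction m, hm using Nat.le_induction with
  | base =>
    induction n, hn using Nat.le_induction with
    | base => exact ⟨_, isWarpingPath_one_one⟩
    | succ n _ ih =>
      obtain ⟨p, hp⟩ := ih
      exact ⟨_, hp.cons_map_add (s := (0, 1)) (by simp [wpStep])⟩
  | succ m _ ih =>
    obtain ⟨p, hp⟩ := ih
    exact ⟨_, hp.cons_map_add (s := (1, 0)) (by simp [wpStep])⟩

theorem pathCost_eq_countP (x y : List Bool) (p : List (ℕ × ℕ)) :
    pathCost x y p = p.countP fun q => x.getD q.1 false ≠ y.getD q.2 false := by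
  induction p with
  | nil => rfl
  | cons q p ih =>
    rw [countP_cons, ← ih, add_comm]
    simp [pathCost]

theorem pathCost_map_swap (x y : List Bool) (p : List (ℕ × ℕ)) :
    pathCost y x (p.map Prod.swap) = pathCost x y p := by
  simp [pathCost, Function.comp_def, eq_comm]

theorem pathCost_cons_map_add (x y : List Bool) (p : List (ℕ × ℕ)) (s : ℕ × ℕ) :
    pathCost x y ((0, 0) :: p.map (· + s)) =
      (if x.getD 0 false = y.getD 0 false then 0 else 1) +
        pathCost (x.drop s.1) (y.drop s.2) p := by
  simp [pathCost, Function.comp_def, add_comm]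

section dtwSq

variable {x y : List Bool}

theorem dtwSq_le_pathCost {p : List (ℕ × ℕ)} (hp : IsWarpingPath x.length y.length p) :
    dtwSq x y ≤ pathCost x y p :=
  Nat.sInf_le ⟨p, hp, rfl⟩

theorem exists_pathCost_eq_dtwSq (hx : x ≠ []) (hy : y ≠ []) :
    ∃ p, IsWarpingPath x.length y.length p ∧ pathCost x y p = dtwSq x y := by
  obtain ⟨p, hp⟩ := exists_isWarpingPath (length_pos_iff.2 hx) (length_pos_iff.2 hy)
  exact Nat.sInf_mem (s := {c | ∃ p, IsWarpingPath x.length y.length p ∧ pathCost x y p = c})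
    ⟨_, p, hp, rfl⟩

theorem dtwSq_comm (x y : List Bool) : dtwSq x y = dtwSq y x := by
  have exists_swap (x y : List Bool) (c : ℕ) :
      (∃ p, IsWarpingPath x.length y.length p ∧ pathCost x y p = c) →
        ∃ p, IsWarpingPath y.length x.length p ∧ pathCost y x p = c := by
    rintro ⟨p, hp, rfl⟩
    exact ⟨_, hp.map_swap, pathCost_map_swap x y p⟩
  exact congrArg sInf (Set.ext fun c => ⟨exists_swap x y c, exists_swap y x c⟩)

theorem dtwSq_le_add_dtwSq_drop {s : ℕ × ℕ} (hs : wpStep (0, 0) s) (hx : s.1 < x.length)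
    (hy : s.2 < y.length) :
    dtwSq x y ≤ (if x.getD 0 false = y.getD 0 false then 0 else 1) +
      dtwSq (x.drop s.1) (y.drop s.2) := by
  obtain ⟨p, hp, hcost⟩ := exists_pathCost_eq_dtwSq (x := x.drop s.1) (y := y.drop s.2)
    (by simpa using hx) (by simpa using hy)
  rw [← hcost, ← pathCost_cons_map_add]
  refine dtwSq_le_pathCost ?_
  simpa [Nat.sub_add_cancel hx.le, Nat.sub_add_cancel hy.le] using hp.cons_map_add hs

theorem countP_notMem_le_dtwSq (hx : x ≠ []) (y : List Bool) :
    y.countP (· ∉ x) ≤ dtwSq x y := by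
  rcases eq_or_ne y [] with rfl | hy
  · exact Nat.zero_le _
  obtain ⟨p, hp, hcost⟩ := exists_pathCost_eq_dtwSq hx hy
  have hcols : range y.length <+~ p.map Prod.snd :=
    nodup_range.subperm fun j hj => mem_map.2 (hp.exists_mem_snd_eq (mem_range.1 hj))
  calc y.countP (· ∉ x)
      = ((range y.length).map fun j => y.getD j false).countP (· ∉ x) := by
        congr 1
        exact ext_getElem (by simp) (by simp +contextual)
    _ = (range y.length).countP fun j => y.getD j false ∉ x := by
        simp only [countP_map, Function.comp_def]
    _ ≤ (p.map Prod.snd).countP fun j => y.getD j false ∉ x := hcols.countP_le _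
    _ = p.countP fun q => y.getD q.2 false ∉ x := by
        simp only [countP_map, Function.comp_def]
    _ ≤ p.countP fun q => x.getD q.1 false ≠ y.getD q.2 false := by
        refine countP_mono_left fun q hq hmem => ?_
        simp only [decide_eq_true_eq] at hmem ⊢
        intro heq
        rw [← heq, getD_eq_getElem _ _ (hp.2.2.2 q hq).1] at hmem
        exact hmem (getElem_mem _)
    _ = dtwSq x y := by rw [← pathCost_eq_countP, hcost]

theorem length_le_dtwSq_of_disjoint (hy : y ≠ []) (hxy : x.Disjoint y) :
    x.length ≤ dtwSq x y :=
  calc x.length = x.countP (· ∉ y) :=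
        (countP_eq_length.2 fun _ ha => by simpa using hxy ha).symm
    _ ≤ dtwSq y x := countP_notMem_le_dtwSq hy x
    _ = dtwSq x y := dtwSq_comm y x

end dtwSq

section replicate

variable {n : ℕ} {b : Bool} {z : List Bool}

theorem count_not_cons (b c : Bool) (z : List Bool) :
    (c :: z).count (!b) = (if b = c then 0 else 1) + z.count (!b) := by
  cases b <;> cases c <;> simp [add_comm]

theorem dtwSq_singleton_le_count_not (b : Bool) (hz : z ≠ []) :
    dtwSq [b] z ≤ z.count (!b) := by
  induction z with
  | nil => contradiction
  | cons c z ih =>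
    rcases eq_or_ne z [] with rfl | hz'
    · calc dtwSq [b] [c] ≤ pathCost [b] [c] [(0, 0)] := dtwSq_le_pathCost isWarpingPath_one_one
        _ = [c].count (!b) := by rw [count_not_cons]; simp [pathCost]
    · calc dtwSq [b] (c :: z)
          ≤ (if b = c then 0 else 1) + dtwSq [b] z :=
            dtwSq_le_add_dtwSq_drop (s := (0, 1)) (by simp [wpStep]) (by simp)
              (by simpa [length_pos_iff] using hz')
        _ ≤ (if b = c then 0 else 1) + z.count (!b) := by gcongr; exact ih hz'
        _ = (c :: z).count (!b) := (count_not_cons b c z).symm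

theorem dtwSq_replicate_cons_le_count_not (hn : 0 < n) (b : Bool) (z : List Bool) :
    dtwSq (replicate n b) (b :: z) ≤ z.count (!b) := by
  induction n, hn using Nat.le_induction with
  | base => simpa using dtwSq_singleton_le_count_not b (cons_ne_nil b z)
  | succ n hn ih =>
    calc dtwSq (replicate (n + 1) b) (b :: z)
        ≤ dtwSq (replicate n b) (b :: z) := by
          simpa using dtwSq_le_add_dtwSq_drop (x := replicate (n + 1) b) (y := b :: z)
            (s := (1, 0)) (by simp [wpStep]) (by simpa using Nat.lt_of_succ_le hn) (by simp)
      _ ≤ z.count (!b) := ih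

theorem dtwSq_replicate_le_count_not (hn : 0 < n) (hb : b ∈ z) :
    dtwSq (replicate n b) z ≤ z.count (!b) := by
  induction z with
  | nil => contradiction
  | cons c z ih =>
    rcases eq_or_ne c b with rfl | hc
    · simpa using dtwSq_replicate_cons_le_count_not hn c z
    · have hbz : b ∈ z := (mem_cons.1 hb).resolve_left hc.symm
      calc dtwSq (replicate n b) (c :: z)
          ≤ 1 + dtwSq (replicate n b) z :=
            (dtwSq_le_add_dtwSq_drop (s := (0, 1)) (by simp [wpStep]) (by simpa using hn)
              (by simpa using length_pos_of_mem hbz)).trans (by gcongr <;> [split <;> simp; simp])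
        _ ≤ 1 + z.count (!b) := by gcongr; exact ih hbz
        _ = (c :: z).count (!b) := by rw [count_not_cons, if_neg hc.symm]

theorem dtwSq_replicate_of_mem (hn : 0 < n) (hb : b ∈ z) :
    dtwSq (replicate n b) z = z.count (!b) := by
  refine (dtwSq_replicate_le_count_not hn hb).antisymm ?_
  calc z.count (!b) = z.countP (· ∉ replicate n b) := 
        countP_congr fun c _ => by simp [mem_replicate, hn.ne', Bool.eq_not]
    _ ≤ dtwSq (replicate n b) z := countP_notMem_le_dtwSq (by simpa using hn.ne') z

theorem le_dtwSq_replicate_of_notMem (hz : z ≠ []) (hb : b ∉ z) :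
    n ≤ dtwSq (replicate n b) z := by
  simpa using length_le_dtwSq_of_disjoint (x := replicate n b) hz
    fun a ha haz => hb (eq_of_mem_replicate ha ▸ haz)

end replicate

section Fobj

variable {m n : ℕ} {z : List Bool}

theorem Fobj_pair (x y z : List Bool) : Fobj [x, y] z = dtwSq x z + dtwSq y z := by
  simp [Fobj]

theorem Fobj_replicate_of_mem (hm : 0 < m) (hn : 0 < n) (hfalse : false ∈ z) (htrue : true ∈ z) :
    Fobj [replicate m false, replicate n true] z = z.length := by
  rw [Fobj_pair, dtwSq_replicate_of_mem hm hfalse, dtwSq_replicate_of_mem hn htrue]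
  exact count_true_add_count_false z

theorem min_le_Fobj_replicate (b : Bool) (hz : z ≠ []) (hb : b ∉ z) :
    min m n ≤ Fobj [replicate m false, replicate n true] z := by
  rw [Fobj_pair]
  cases b
  · exact (min_le_left m n).trans ((le_dtwSq_replicate_of_notMem hz hb).trans le_self_add)
  · exact (min_le_right m n).trans ((le_dtwSq_replicate_of_notMem hz hb).trans le_add_self)

theorem two_le_Fobj_replicate (hm : 2 ≤ m) (hn : 2 ≤ n) (hz : z ≠ []) :
    2 ≤ Fobj [replicate m false, replicate n true] z := by
  by_cases! hall : ∀ b, b ∈ z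
  · rw [Fobj_replicate_of_mem (by omega) (by omega) (hall false) (hall true),
      ← count_false_add_count_true]
    have hfalse := count_pos_iff.2 (hall false)
    have htrue := count_pos_iff.2 (hall true)
    omega
  · obtain ⟨b, hb⟩ := hall
    exact (le_min hm hn).trans (min_le_Fobj_replicate b hz hb)

end Fobj

theorem mem_condense {a : Bool} {z : List Bool} : a ∈ condense z ↔ a ∈ z := by
  fun_induction condense z with grind

theorem exists_notMem_of_length_condense_eq_one {z : List Bool} (hz : (condense z).length = 1) :
    ∃ b, b ∉ z := by
  obtain ⟨a, ha⟩ := length_eq_one_iff.1 hz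
  exact ⟨!a, by simp [← mem_condense, ha]⟩

theorem condense_replicate {n : ℕ} (hn : 0 < n) (b : Bool) : condense (replicate n b) = [b] := by
  induction n, hn using Nat.le_induction with
  | base => rfl
  | succ n hn ih =>
    obtain ⟨k, rfl⟩ := Nat.exists_eq_add_of_le' hn
    simpa [replicate_succ, condense] using ih

theorem mean_upper_bound_tight_general {m n : ℕ} (hm : 3 ≤ m) (hn : 3 ≤ n) :
    let ss : List (List Bool) := [replicate m false, replicate n true]
    Fobj ss [false, true] = 2 ∧ Fobj ss [true, false] = 2 ∧
    (∀ z : List Bool, z ≠ [] → 2 ≤ Fobj ss z) ∧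
    IsMean ss [false, true] ∧ IsMean ss [true, false] ∧
    (∀ z : List Bool, z ≠ [] → (condense z).length = 1 → ¬ IsMean ss z) ∧
    (condense [false, true]).length =
      ((ss.map fun s => (condense s).length).foldr max 0) + 1 := by
  intro ss
  have h01 : Fobj ss [false, true] = 2 :=
    Fobj_replicate_of_mem (by omega) (by omega) (by simp) (by simp)
  have h10 : Fobj ss [true, false] = 2 :=
    Fobj_replicate_of_mem (by omega) (by omega) (by simp) (by simp)
  have two_le (z : List Bool) (hz : z ≠ []) : 2 ≤ Fobj ss z :=
    two_le_Fobj_replicate (by omega) (by omega) hz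
  refine ⟨h01, h10, two_le, ⟨by simp, fun w hw => h01.trans_le (two_le w hw)⟩,
    ⟨by simp, fun w hw => h10.trans_le (two_le w hw)⟩, fun z hz hcond hmean => ?_, ?_⟩
  · obtain ⟨b, hb⟩ := exists_notMem_of_length_condense_eq_one hcond
    have three_le : 3 ≤ Fobj ss z := (le_min hm hn).trans (min_le_Fobj_replicate b hz hb)
    have le_two : Fobj ss z ≤ 2 := (hmean.2 [false, true] (by simp)).trans_eq h01
    omega
  · simp [ss, condense, condense_replicate (show 0 < m by omega),
      condense_replicate (show 0 < n by omega)]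

/-- for the inputs `000` and `111` (encoded with `0 = false`,
`1 = true`), the strings `01` and `10` are means with `F`-value `2`, every
nonempty binary string has `F`-value at least `2`, no string with exactly one
block is a mean, and the means `01`/`10` have condensation length `m + 1`
where `m = 1` is the maximum input condensation length (tightness of the
upper bound). -/
theorem mean_upper_bound_tight :
    let ss : List (List Bool) := [[false, false, false], [true, true, true]]
    Fobj ss [false, true] = 2 ∧ Fobj ss [true, false] = 2 ∧
    (∀ z : List Bool, z ≠ [] → 2 ≤ Fobj ss z) ∧
    IsMean ss [false, true] ∧ IsMean ss [true, false] ∧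
    (∀ z : List Bool, z ≠ [] → (condense z).length = 1 → ¬ IsMean ss z) ∧
    (condense [false, true]).length =
      ((ss.map fun s => (condense s).length).foldr max 0) + 1 :=
  mean_upper_bound_tight_general le_rfl le_rfl
end
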